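/- In the setting of the dgl (L₁, D) built from minimal Quillen models of 2-cones, for every k ≥ 3 and all A₁, …, A_k ∈ 𝕃(V), the iterated bracket of derivations [[[[D, σ_{A₁}], σ_{A₂}] ⋯ ], σ_{A_k}] vanishes on 𝕃(W₀). -/

import Mathlib

universe u

/-- A graded Lie algebra over `ℚ`: a `ℤ`-graded vector space with a bilinear bracket
satisfying graded antisymmetry and the graded Jacobi identity on homogeneous elements. -/
structure GLA (Lc : Type u) [AddCommGroup Lc] [Module ℚ Lc] where
  grade : ℤ → Submodule ℚ Lc
  internal : DirectSum.IsInternal grade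
  br : Lc →ₗ[ℚ] Lc →ₗ[ℚ] Lc
  br_mem : ∀ {i j : ℤ} {x y : Lc}, x ∈ grade i → y ∈ grade j → br x y ∈ grade (i + j)
  antisymm : ∀ {i j : ℤ} {x y : Lc}, x ∈ grade i → y ∈ grade j →
      br x y = -((-1 : ℚ) ^ (i * j) • br y x)
  jacobi : ∀ {i j : ℤ} {x y : Lc} (z : Lc), x ∈ grade i → y ∈ grade j →
      br x (br y z) = br (br x y) z + (-1 : ℚ) ^ (i * j) • br y (br x z)

namespace GLA

variable {Lc : Type u} [AddCommGroup Lc] [Module ℚ Lc]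

/-- The Lie subalgebra (as a submodule closed under the bracket) generated by
a graded family of subspaces. -/
def lieSub (G : GLA Lc) (p : ℤ → Submodule ℚ Lc) : Submodule ℚ Lc :=
  sInf {q | (∀ i, p i ≤ q) ∧ ∀ x ∈ q, ∀ y ∈ q, G.br x y ∈ q}

/-- The submodule of decomposable elements of `L`: the span of all brackets. -/
def dec (G : GLA Lc) : Submodule ℚ Lc :=
  Submodule.span ℚ {x : Lc | ∃ a b : Lc, x = G.br a b}

/-- A graded Lie algebra is reduced if it vanishes in degrees `≤ 0`. -/
def Reduced (G : GLA Lc) : Prop := ∀ i : ℤ, i ≤ 0 → G.grade i = ⊥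

end GLA


/-- Iterated bracket of derivations: starting from the pair `(D, -1)` (the differential
together with its degree), successively form `([θ, σ_A], d + |A| + 1)` where
`[θ, σ_A] = θ ∘ σ_A - (-1)^{d(|A|+1)} σ_A ∘ θ` for the entries `(|A|, A)` of the list. -/
def iterBr {Lc : Type u} [AddCommGroup Lc] [Module ℚ Lc]
    (sg : ℤ → Lc → (Lc →ₗ[ℚ] Lc)) (D : Lc →ₗ[ℚ] Lc) (l : List (ℤ × Lc)) :
    (Lc →ₗ[ℚ] Lc) × ℤ :=
  l.foldl
    (fun θd p =>
      (θd.1 ∘ₗ sg p.1 p.2 - ((-1 : ℚ) ^ (θd.2 * (p.1 + 1))) • (sg p.1 p.2 ∘ₗ θd.1),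
        θd.2 + p.1 + 1))
    (D, -1)

/-!
Write `V` for `V₀ ⊕ V₁` and `W` for `W₀`. Give the generators in `V` and the suspensions `s(v ⊗ w)`
weight `0`, the generators in `W` weight `1`, and filter `L` by the weight of Lie words. For
`A ∈ 𝕃(V)` the derivation `σ_A` kills `V` and the suspensions and sends `w ∈ W` to `± σ_w(A)`, which
is built from `V` and suspensions only, so it lowers the weight by one. Since `D` kills `W` and
preserves `𝕃(V)`, it raises the weight by at most one, because of the term `[v, w]` of `D s(v ⊗ w)`.
Hence the `k`-fold bracket of `D` with such `σ_A` shifts the weight by `1 - k` and sends `W` to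
weight `2 - k`. For `k ≥ 3` this is negative, so the bracket vanishes on `W` and, being a
derivation, on `𝕃(W)`.
-/

/-- The graded commutator of endomorphisms `θ` and `τ` of degrees `d` and `e`. -/
def gradedCommutator {Lc : Type u} [AddCommGroup Lc] [Module ℚ Lc] (d e : ℤ)
    (θ τ : Lc →ₗ[ℚ] Lc) : Lc →ₗ[ℚ] Lc :=
  θ ∘ₗ τ - (-1 : ℚ) ^ (d * e) • (τ ∘ₗ θ)

theorem iterBr_append_singleton {Lc : Type u} [AddCommGroup Lc] [Module ℚ Lc]
    (sg : ℤ → Lc → (Lc →ₗ[ℚ] Lc)) (D : Lc →ₗ[ℚ] Lc) (l : List (ℤ × Lc)) (p : ℤ × Lc) :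
    iterBr sg D (l ++ [p]) =
      (gradedCommutator (iterBr sg D l).2 (p.1 + 1) (iterBr sg D l).1 (sg p.1 p.2),
        (iterBr sg D l).2 + (p.1 + 1)) := by
  simp [iterBr, gradedCommutator, List.foldl_append, add_assoc]

/-- The endomorphism `θ` shifts the filtration `F` by `c`. -/
def ShiftsFiltration {Lc : Type u} [AddCommGroup Lc] [Module ℚ Lc] (F : ℤ → Submodule ℚ Lc)
    (c : ℤ) (θ : Lc →ₗ[ℚ] Lc) : Prop :=
  ∀ ⦃n : ℤ⦄ ⦃x : Lc⦄, x ∈ F n → θ x ∈ F (n + c)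

namespace ShiftsFiltration

variable {Lc : Type u} [AddCommGroup Lc] [Module ℚ Lc] {F : ℤ → Submodule ℚ Lc}

theorem gradedCommutator {b c : ℤ} {θ τ : Lc →ₗ[ℚ] Lc} (hθ : ShiftsFiltration F b θ)
    (hτ : ShiftsFiltration F c τ) (d e : ℤ) :
    ShiftsFiltration F (b + c) (gradedCommutator d e θ τ) := by
  intro n x hx
  have hθτ : θ (τ x) ∈ F (n + (b + c)) := by
    simpa only [add_assoc, add_comm c b] using hθ (hτ hx)
  have hτθ : τ (θ x) ∈ F (n + (b + c)) := by
    simpa only [add_assoc] using hτ (hθ hx)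
  exact sub_mem hθτ (Submodule.smul_mem _ _ hτθ)

theorem iterBr {sg : ℤ → Lc → (Lc →ₗ[ℚ] Lc)} {D : Lc →ₗ[ℚ] Lc} {b c : ℤ}
    (hD : ShiftsFiltration F b D) {l : List (ℤ × Lc)}
    (hsg : ∀ p ∈ l, ShiftsFiltration F c (sg p.1 p.2)) :
    ShiftsFiltration F (b + l.length * c) (iterBr sg D l).1 := by
  induction l using List.reverseRecOn with
  | nil =>
    simpa only [_root_.iterBr, List.foldl_nil, List.length_nil, Nat.cast_zero, zero_mul,
      add_zero] using hD
  | append_singleton l p ih =>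
    have hl := ih fun q hq => hsg q (by simp [hq])
    have hlength : b + (l ++ [p]).length * c = b + l.length * c + c := by
      simp only [List.length_append, List.length_singleton]
      push_cast
      ring
    rw [iterBr_append_singleton, hlength]
    exact hl.gradedCommutator (hsg p (by simp)) _ _

end ShiftsFiltration

namespace GLA

variable {Lc : Type u} [AddCommGroup Lc] [Module ℚ Lc] {G : GLA Lc}

section Subalgebra

variable {p p' : ℤ → Submodule ℚ Lc}

theorem mem_lieSub {i : ℤ} {x : Lc} (hx : x ∈ p i) : x ∈ G.lieSub p :=
  Submodule.mem_sInf.2 fun _ hq => hq.1 i hx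

theorem lieSub_le {q : Submodule ℚ Lc} (hp : ∀ i, p i ≤ q)
    (hbr : ∀ x ∈ q, ∀ y ∈ q, G.br x y ∈ q) : G.lieSub p ≤ q :=
  sInf_le ⟨hp, hbr⟩

theorem lieSub_mono (h : ∀ i, p i ≤ p' i) : G.lieSub p ≤ G.lieSub p' :=
  sInf_le_sInf fun _ hq => ⟨fun i => (h i).trans (hq.1 i), hq.2⟩

end Subalgebra

/-- Lie words in generators: `gen m i x` says that `x` is a generator of weight `m` and degree `i`,
and weights and degrees add up under the bracket. -/
inductive IsWord (G : GLA Lc) (gen : ℕ → ℤ → Lc → Prop) : ℕ → ℤ → Lc → Prop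
  | of {m : ℕ} {i : ℤ} {x : Lc} : gen m i x → IsWord G gen m i x
  | br {m n : ℕ} {i j : ℤ} {x y : Lc} :
      IsWord G gen m i x → IsWord G gen n j y → IsWord G gen (m + n) (i + j) (G.br x y)

/-- The filtration of a graded Lie algebra by the weight of Lie words. It is indexed by `ℤ` so that
endomorphisms may lower the weight; its negative part is zero. -/
def wordFiltration (G : GLA Lc) (gen : ℕ → ℤ → Lc → Prop) (n : ℤ) : Submodule ℚ Lc :=
  Submodule.span ℚ {x | ∃ (m : ℕ) (i : ℤ), (m : ℤ) ≤ n ∧ G.IsWord gen m i x}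

/-- Graded derivations of degree `d`. -/
structure IsDer (G : GLA Lc) (d : ℤ) (θ : Lc →ₗ[ℚ] Lc) : Prop where
  mem_grade : ∀ {n : ℤ} {x : Lc}, x ∈ G.grade n → θ x ∈ G.grade (n + d)
  map_br : ∀ {n : ℤ} (x y : Lc), x ∈ G.grade n →
    θ (G.br x y) = G.br (θ x) y + (-1 : ℚ) ^ (d * n) • G.br x (θ y)

section WordFiltration

variable {gen : ℕ → ℤ → Lc → Prop}

theorem IsWord.mem_grade (hgen : ∀ ⦃m i x⦄, gen m i x → x ∈ G.grade i) {m : ℕ} {i : ℤ} {x : Lc}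
    (hx : G.IsWord gen m i x) : x ∈ G.grade i := by
  induction hx with
  | of hx => exact hgen hx
  | br _ _ hx hy => exact G.br_mem hx hy

theorem IsWord.mem_wordFiltration {m : ℕ} {i n : ℤ} {x : Lc} (hx : G.IsWord gen m i x)
    (hmn : m ≤ n) : x ∈ G.wordFiltration gen n :=
  Submodule.subset_span ⟨m, i, hmn, hx⟩

theorem wordFiltration_mono : Monotone (G.wordFiltration gen) := fun _ _ h =>
  Submodule.span_mono fun _ ⟨m, i, hm, hx⟩ => ⟨m, i, hm.trans h, hx⟩

theorem wordFiltration_eq_bot {n : ℤ} (hn : n < 0) : G.wordFiltration gen n = ⊥ :=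
  Submodule.span_eq_bot.2 fun _ ⟨m, _, hm, _⟩ => absurd hm (by omega)

theorem br_mem_wordFiltration {m n : ℤ} {x y : Lc} (hx : x ∈ G.wordFiltration gen m)
    (hy : y ∈ G.wordFiltration gen n) : G.br x y ∈ G.wordFiltration gen (m + n) := by
  have hxy := Submodule.apply_mem_map₂ G.br hx hy
  rw [wordFiltration, wordFiltration, Submodule.map₂_span_span] at hxy
  refine Submodule.span_mono ?_ hxy
  rintro _ ⟨x, ⟨a, i, ha, hx⟩, y, ⟨b, j, hb, hy⟩, rfl⟩
  exact ⟨a + b, i + j, by omega, hx.br hy⟩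

theorem lieSub_le_wordFiltration_zero {p : ℤ → Submodule ℚ Lc}
    (hp : ∀ ⦃i x⦄, x ∈ p i → gen 0 i x) : G.lieSub p ≤ G.wordFiltration gen 0 :=
  lieSub_le (fun _ _ hx => (IsWord.of (hp hx)).mem_wordFiltration le_rfl)
    fun _ hx _ hy => add_zero (0 : ℤ) ▸ br_mem_wordFiltration hx hy

theorem IsDer.shiftsFiltration {d c : ℤ} {θ : Lc →ₗ[ℚ] Lc} (hθ : G.IsDer d θ)
    (hgen : ∀ ⦃m i x⦄, gen m i x → x ∈ G.grade i)
    (hθgen : ∀ ⦃m i x⦄, gen m i x → θ x ∈ G.wordFiltration gen (m + c)) :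
    ShiftsFiltration (G.wordFiltration gen) c θ := by
  have hword : ∀ {m i x}, G.IsWord gen m i x → θ x ∈ G.wordFiltration gen (m + c) := by
    intro m i x hx
    induction hx with
    | of hx => exact hθgen hx
    | @br m n i j x y hx hy ihx ihy =>
      have hleft : G.br (θ x) y ∈ G.wordFiltration gen ((m + n : ℕ) + c) := by
        convert br_mem_wordFiltration ihx (hy.mem_wordFiltration le_rfl) using 2
        push_cast
        ring
      have hright : G.br x (θ y) ∈ G.wordFiltration gen ((m + n : ℕ) + c) := by
        convert br_mem_wordFiltration (hx.mem_wordFiltration le_rfl) ihy using 2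
        push_cast
        ring
      rw [hθ.map_br x y (hx.mem_grade hgen)]
      exact add_mem hleft (Submodule.smul_mem _ _ hright)
  intro n x hx
  refine (Submodule.span_le.2 ?_ : _ ≤ (G.wordFiltration gen (n + c)).comap θ) hx
  rintro x ⟨m, i, hm, hx⟩
  exact wordFiltration_mono (by omega) (hword hx)

end WordFiltration

namespace IsDer

variable {d e : ℤ} {θ τ : Lc →ₗ[ℚ] Lc}

theorem eq_zero_of_mem_lieSub (hθ : G.IsDer d θ) {p : ℤ → Submodule ℚ Lc}
    (hp : ∀ i, p i ≤ G.grade i) (hzero : ∀ ⦃i x⦄, x ∈ p i → θ x = 0) {x : Lc}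
    (hx : x ∈ G.lieSub p) : θ x = 0 := by
  -- With all generators in weight `0`, the derivation `θ` shifts the weight by `-1`.
  let gen : ℕ → ℤ → Lc → Prop := fun m i x => m = 0 ∧ x ∈ p i
  have hshift : ShiftsFiltration (G.wordFiltration gen) (-1) θ :=
    hθ.shiftsFiltration (fun _ i _ hx => hp i hx.2) fun _ _ _ hx => by
      rw [hzero hx.2]
      exact zero_mem _
  have hθx := hshift (lieSub_le_wordFiltration_zero (fun _ _ hx => ⟨rfl, hx⟩) hx)
  rwa [wordFiltration_eq_bot (by norm_num), Submodule.mem_bot] at hθx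

theorem gradedCommutator (hθ : G.IsDer d θ) (hτ : G.IsDer e τ) :
    G.IsDer (d + e) (gradedCommutator d e θ τ) where
  mem_grade {n x} hx := by
    have hθτ : θ (τ x) ∈ G.grade (n + (d + e)) := by
      simpa only [add_assoc, add_comm e d] using hθ.mem_grade (hτ.mem_grade hx)
    have hτθ : τ (θ x) ∈ G.grade (n + (d + e)) := by
      simpa only [add_assoc] using hτ.mem_grade (hθ.mem_grade hx)
    exact sub_mem hθτ (Submodule.smul_mem _ _ hτθ)
  map_br {n} x y hx := by
    have hneg : (-1 : ℚ) ≠ 0 := by norm_num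
    have hsq : (-1 : ℚ) ^ (e * d) * (-1 : ℚ) ^ (e * d) = 1 := by
      rw [← mul_zpow]
      norm_num
    simp only [_root_.gradedCommutator, LinearMap.sub_apply, LinearMap.comp_apply,
      LinearMap.smul_apply, hτ.map_br x y hx, hθ.map_br x y hx, map_add, map_sub, map_smul,
      hθ.map_br _ _ (hτ.mem_grade hx), hτ.map_br _ _ (hθ.mem_grade hx), hθ.map_br _ _ hx,
      hτ.map_br _ _ hx, mul_add, add_mul, zpow_add₀ hneg, mul_comm d e]
    match_scalars <;> first | linear_combination (-(-1 : ℚ) ^ (e * n)) * hsq | ring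

theorem iterBr {sg : ℤ → Lc → (Lc →ₗ[ℚ] Lc)} {D : Lc →ₗ[ℚ] Lc} (hD : G.IsDer (-1) D)
    {l : List (ℤ × Lc)} (hsg : ∀ p ∈ l, G.IsDer (p.1 + 1) (sg p.1 p.2)) :
    G.IsDer (iterBr sg D l).2 (iterBr sg D l).1 := by
  induction l using List.reverseRecOn with
  | nil => exact hD
  | append_singleton l p ih =>
    have hl := ih fun q hq => hsg q (by simp [hq])
    rw [iterBr_append_singleton]
    exact hl.gradedCommutator (hsg p (by simp))

end IsDer

/-- The generators `V ⊕ W ⊕ s(V ⊗ W)`, where `W` has weight `1` and all others have weight `0`. -/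
inductive SuspGen (V W : ℤ → Submodule ℚ Lc) (s : Lc → Lc → Lc) : ℕ → ℤ → Lc → Prop
  | left {i : ℤ} {v : Lc} : v ∈ V i → SuspGen V W s 0 i v
  | right {j : ℤ} {w : Lc} : w ∈ W j → SuspGen V W s 1 j w
  | susp {i j : ℤ} {v w : Lc} : v ∈ V i → w ∈ W j → SuspGen V W s 0 (j + (i + 1)) (s v w)

/-- The family of derivations `σ_A` of degree `|A| + 1`, for homogeneous `A ∈ 𝕃(V ⊕ W)`, attached
to a suspension `s(v ⊗ w)` of degree `|v| + |w| + 1`; `σ a A` stands for `σ_A` with `a = |A|`. -/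
structure IsSuspDerFamily (G : GLA Lc) (V W : ℤ → Submodule ℚ Lc) (s : Lc → Lc → Lc)
    (σ : ℤ → Lc → (Lc →ₗ[ℚ] Lc)) : Prop where
  left_le_grade : ∀ i, V i ≤ G.grade i
  right_le_grade : ∀ j, W j ≤ G.grade j
  isDer : ∀ {a : ℤ} {A : Lc}, A ∈ G.lieSub (fun i => V i ⊔ W i) → A ∈ G.grade a →
    G.IsDer (a + 1) (σ a A)
  left_left : ∀ {i i' : ℤ} {v v' : Lc}, v ∈ V i → v' ∈ V i' → σ i v v' = 0
  left_right : ∀ {i j : ℤ} {v w : Lc}, v ∈ V i → w ∈ W j → σ i v w = s v w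
  right_left : ∀ {i j : ℤ} {v w : Lc}, v ∈ V i → w ∈ W j →
    σ j w v = (-1 : ℚ) ^ (i * j) • s v w
  right_right : ∀ {j j' : ℤ} {w w' : Lc}, w ∈ W j → w' ∈ W j' → σ j w w' = 0
  apply_left : ∀ {a : ℤ} {A : Lc}, A ∈ G.lieSub (fun i => V i ⊔ W i) → A ∈ G.grade a →
    ∀ {i : ℤ} {v : Lc}, v ∈ V i → σ a A v = (-1 : ℚ) ^ (i * a) • σ i v A
  apply_right : ∀ {a : ℤ} {A : Lc}, A ∈ G.lieSub (fun i => V i ⊔ W i) → A ∈ G.grade a →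
    ∀ {j : ℤ} {w : Lc}, w ∈ W j → σ a A w = (-1 : ℚ) ^ (j * a) • σ j w A
  apply_susp : ∀ {a : ℤ} {A : Lc}, A ∈ G.lieSub (fun i => V i ⊔ W i) → A ∈ G.grade a →
    ∀ {i j : ℤ} {v w : Lc}, v ∈ V i → w ∈ W j → σ a A (s v w) = 0

/-- A derivation `D` of degree `-1` that preserves `𝕃(V)`, vanishes on `W` and is given on
suspensions by `D s(v ⊗ w) = [v, w] - (-1)^{(|v|+1)|w|} σ_w(D v)`. -/
structure IsSuspDifferential (G : GLA Lc) (V W : ℤ → Submodule ℚ Lc) (s : Lc → Lc → Lc)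
    (σ : ℤ → Lc → (Lc →ₗ[ℚ] Lc)) (D : Lc →ₗ[ℚ] Lc) : Prop where
  isDer : G.IsDer (-1) D
  apply_left : ∀ {i : ℤ} {v : Lc}, v ∈ V i → D v ∈ G.lieSub V
  apply_right : ∀ {j : ℤ} {w : Lc}, w ∈ W j → D w = 0
  apply_susp : ∀ {i j : ℤ} {v w : Lc}, v ∈ V i → w ∈ W j →
    D (s v w) = G.br v w - (-1 : ℚ) ^ ((i + 1) * j) • σ j w (D v)

section Suspension

variable {V W : ℤ → Submodule ℚ Lc} {s : Lc → Lc → Lc} {σ : ℤ → Lc → (Lc →ₗ[ℚ] Lc)}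

theorem mem_lieSub_sup_of_mem_right {j : ℤ} {w : Lc} (hw : w ∈ W j) :
    w ∈ G.lieSub (fun i => V i ⊔ W i) :=
  mem_lieSub (i := j) (Submodule.mem_sup_right hw)

theorem lieSub_left_le_lieSub_sup : G.lieSub V ≤ G.lieSub (fun i => V i ⊔ W i) :=
  lieSub_mono fun _ => le_sup_left

theorem lieSub_left_le_wordFiltration : G.lieSub V ≤ G.wordFiltration (SuspGen V W s) 0 :=
  lieSub_le_wordFiltration_zero fun _ _ => SuspGen.left

namespace IsSuspDerFamily

variable (hσ : G.IsSuspDerFamily V W s σ)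
include hσ

theorem susp_mem_grade {i j : ℤ} {v w : Lc} (hv : v ∈ V i) (hw : w ∈ W j) :
    s v w ∈ G.grade (j + (i + 1)) := by
  have hvL : v ∈ G.lieSub (fun i => V i ⊔ W i) := lieSub_left_le_lieSub_sup (mem_lieSub hv)
  rw [← hσ.left_right hv hw]
  exact (hσ.isDer hvL (hσ.left_le_grade i hv)).mem_grade (hσ.right_le_grade j hw)

theorem suspGen_mem_grade {m : ℕ} {i : ℤ} {x : Lc} (hx : SuspGen V W s m i x) :
    x ∈ G.grade i := by
  cases hx with
  | left hv => exact hσ.left_le_grade _ hv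
  | right hw => exact hσ.right_le_grade _ hw
  | susp hv hw => exact hσ.susp_mem_grade hv hw

theorem isDer_of_mem_lieSub_left {a : ℤ} {A : Lc} (hA : A ∈ G.lieSub V) (ha : A ∈ G.grade a) :
    G.IsDer (a + 1) (σ a A) :=
  hσ.isDer (lieSub_left_le_lieSub_sup hA) ha

theorem apply_left_eq_zero {a i : ℤ} {A v : Lc} (hA : A ∈ G.lieSub V) (ha : A ∈ G.grade a)
    (hv : v ∈ V i) : σ a A v = 0 := by
  have hσv : G.IsDer (i + 1) (σ i v) :=
    hσ.isDer_of_mem_lieSub_left (mem_lieSub hv) (hσ.left_le_grade i hv)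
  have hσvA : σ i v A = 0 :=
    hσv.eq_zero_of_mem_lieSub hσ.left_le_grade (fun _ _ => hσ.left_left hv) hA
  rw [hσ.apply_left (lieSub_left_le_lieSub_sup hA) ha hv, hσvA, smul_zero]

theorem shiftsFiltration_right {j : ℤ} {w : Lc} (hw : w ∈ W j) :
    ShiftsFiltration (G.wordFiltration (SuspGen V W s)) 0 (σ j w) := by
  have hwL : w ∈ G.lieSub (fun i => V i ⊔ W i) := mem_lieSub_sup_of_mem_right hw
  have hwj := hσ.right_le_grade j hw
  refine (hσ.isDer hwL hwj).shiftsFiltration (fun _ _ _ => hσ.suspGen_mem_grade) ?_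
  intro m i x hx
  rw [add_zero]
  cases hx with
  | left hv =>
    rw [hσ.right_left hv hw]
    exact Submodule.smul_mem _ _ ((IsWord.of (.susp hv hw)).mem_wordFiltration le_rfl)
  | right hw' =>
    rw [hσ.right_right hw hw']
    exact zero_mem _
  | susp hv' hw' =>
    rw [hσ.apply_susp hwL hwj hv' hw']
    exact zero_mem _

theorem right_apply_mem_wordFiltration {j : ℤ} {w A : Lc} (hw : w ∈ W j) (hA : A ∈ G.lieSub V) :
    σ j w A ∈ G.wordFiltration (SuspGen V W s) 0 := by
  simpa only [add_zero] using hσ.shiftsFiltration_right hw (lieSub_left_le_wordFiltration hA)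

theorem shiftsFiltration_of_mem_lieSub_left {a : ℤ} {A : Lc} (hA : A ∈ G.lieSub V)
    (ha : A ∈ G.grade a) :
    ShiftsFiltration (G.wordFiltration (SuspGen V W s)) (-1) (σ a A) := by
  have hAL : A ∈ G.lieSub (fun i => V i ⊔ W i) := lieSub_left_le_lieSub_sup hA
  refine (hσ.isDer hAL ha).shiftsFiltration (fun _ _ _ => hσ.suspGen_mem_grade) ?_
  intro m i x hx
  cases hx with
  | left hv =>
    rw [hσ.apply_left_eq_zero hA ha hv]
    exact zero_mem _
  | right hw =>
    rw [hσ.apply_right hAL ha hw]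
    exact Submodule.smul_mem _ _ (hσ.right_apply_mem_wordFiltration hw hA)
  | susp hv hw =>
    rw [hσ.apply_susp hAL ha hv hw]
    exact zero_mem _

theorem shiftsFiltration_differential {D : Lc →ₗ[ℚ] Lc}
    (hD : G.IsSuspDifferential V W s σ D) :
    ShiftsFiltration (G.wordFiltration (SuspGen V W s)) 1 D := by
  refine hD.isDer.shiftsFiltration (fun _ _ _ => hσ.suspGen_mem_grade) ?_
  intro m i x hx
  cases hx with
  | left hv =>
    exact wordFiltration_mono (by norm_num) (lieSub_left_le_wordFiltration (hD.apply_left hv))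
  | right hw =>
    rw [hD.apply_right hw]
    exact zero_mem _
  | @susp i j v w hv hw =>
    have hbr : G.br v w ∈ G.wordFiltration (SuspGen V W s) (0 + 1) :=
      br_mem_wordFiltration ((IsWord.of (.left hv)).mem_wordFiltration le_rfl)
        ((IsWord.of (.right hw)).mem_wordFiltration le_rfl)
    have hσDv : σ j w (D v) ∈ G.wordFiltration (SuspGen V W s) 0 :=
      hσ.right_apply_mem_wordFiltration hw (hD.apply_left hv)
    rw [hD.apply_susp hv hw]
    exact sub_mem hbr (Submodule.smul_mem _ _ (wordFiltration_mono (by norm_num) hσDv))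

theorem iterBr_right_eq_zero {D : Lc →ₗ[ℚ] Lc} (hD : G.IsSuspDifferential V W s σ D)
    {l : List (ℤ × Lc)} (hlength : 3 ≤ l.length)
    (hl : ∀ p ∈ l, p.2 ∈ G.lieSub V ∧ p.2 ∈ G.grade p.1) {j : ℤ} {w : Lc} (hw : w ∈ W j) :
    (iterBr σ D l).1 w = 0 := by
  have hshift := (hσ.shiftsFiltration_differential hD).iterBr fun p hp =>
    hσ.shiftsFiltration_of_mem_lieSub_left (hl p hp).1 (hl p hp).2
  have hmem := hshift ((IsWord.of (.right hw)).mem_wordFiltration le_rfl)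
  rwa [wordFiltration_eq_bot (by push_cast; omega), Submodule.mem_bot] at hmem

end IsSuspDerFamily

end Suspension

end GLA

theorem statement10_general {Lc : Type u} [AddCommGroup Lc] [Module ℚ Lc] {G : GLA Lc}
    {V W : ℤ → Submodule ℚ Lc} {s : Lc → Lc → Lc} {σ : ℤ → Lc → (Lc →ₗ[ℚ] Lc)}
    {D : Lc →ₗ[ℚ] Lc} (hσ : G.IsSuspDerFamily V W s σ) (hD : G.IsSuspDifferential V W s σ D)
    {l : List (ℤ × Lc)} (hlength : 3 ≤ l.length)
    (hl : ∀ p ∈ l, p.2 ∈ G.lieSub V ∧ p.2 ∈ G.grade p.1) {T : Lc} (hT : T ∈ G.lieSub W) :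
    (iterBr σ D l).1 T = 0 := by
  have hder : G.IsDer (iterBr σ D l).2 (iterBr σ D l).1 :=
    hD.isDer.iterBr fun p hp => hσ.isDer_of_mem_lieSub_left (hl p hp).1 (hl p hp).2
  exact hder.eq_zero_of_mem_lieSub hσ.right_le_grade
    (fun _ _ => hσ.iterBr_right_eq_zero hD hlength hl) hT

/-- Lemma 3.10.  In the dgl `(L₁, D)` built from minimal Quillen models
of 2-cones, for every `k ≥ 3` and all homogeneous `A₁, …, A_k ∈ 𝕃(V)`, the iterated
bracket `[[[[D, σ_{A₁}], σ_{A₂}] ⋯ ], σ_{A_k}]` vanishes on `𝕃(W₀)`. -/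
theorem statement10
    {Lc : Type u} [AddCommGroup Lc] [Module ℚ Lc] (G : GLA Lc)
    (V0 V1 W0 W1 Sp : ℤ → Submodule ℚ Lc)
    -- the ambient free Lie algebra is reduced
    (hred : G.Reduced)
    (hV0 : ∀ i, V0 i ≤ G.grade i) (hV1 : ∀ i, V1 i ≤ G.grade i)
    (hW0 : ∀ i, W0 i ≤ G.grade i) (hW1 : ∀ i, W1 i ≤ G.grade i)
    (hSp : ∀ i, Sp i ≤ G.grade i)
    -- the suspension `s(v ⊗ w)`, bilinear, of degree `|v|+|w|+1`; in `L₁` only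
    -- `s(V₀⊗W₀) ⊕ s(V₁⊗W₀) ⊕ s(V₀⊗W₁)` is present
    (sus : Lc →ₗ[ℚ] Lc →ₗ[ℚ] Lc)
    (hsus00 : ∀ {i j : ℤ} {v w : Lc}, v ∈ V0 i → w ∈ W0 j → sus v w ∈ Sp (i + j + 1))
    (hsus10 : ∀ {i j : ℤ} {v w : Lc}, v ∈ V1 i → w ∈ W0 j → sus v w ∈ Sp (i + j + 1))
    (hsus01 : ∀ {i j : ℤ} {v w : Lc}, v ∈ V0 i → w ∈ W1 j → sus v w ∈ Sp (i + j + 1))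
    -- `L₁` is generated by `V ⊕ W ⊕ s(V₀⊗W₀) ⊕ s(V₁⊗W₀) ⊕ s(V₀⊗W₁)`
    (hgen : G.lieSub (fun i => V0 i ⊔ V1 i ⊔ W0 i ⊔ W1 i ⊔ Sp i) = ⊤)
    -- the derivations `σ_A` for homogeneous `A ∈ 𝕃(V ⊕ W)`
    (sg : ℤ → Lc → (Lc →ₗ[ℚ] Lc))
    (hsg_grade : ∀ {a : ℤ} {A : Lc}, A ∈ G.lieSub (fun i => V0 i ⊔ V1 i ⊔ W0 i ⊔ W1 i) →
      A ∈ G.grade a → ∀ {n : ℤ} {x : Lc}, x ∈ G.grade n → sg a A x ∈ G.grade (n + a + 1))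
    (hsg_der : ∀ {a : ℤ} {A : Lc}, A ∈ G.lieSub (fun i => V0 i ⊔ V1 i ⊔ W0 i ⊔ W1 i) →
      A ∈ G.grade a → ∀ {n : ℤ} (x y : Lc), x ∈ G.grade n →
      sg a A (G.br x y) = G.br (sg a A x) y + (-1 : ℚ) ^ ((a + 1) * n) • G.br x (sg a A y))
    (hsg_vw : ∀ {i j : ℤ} {v w : Lc}, v ∈ V0 i ⊔ V1 i → w ∈ W0 j → sg i v w = sus v w)
    (hsg_vw' : ∀ {i j : ℤ} {v w : Lc}, v ∈ V0 i → w ∈ W1 j → sg i v w = sus v w)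
    (hsg_wv : ∀ {i j : ℤ} {v w : Lc}, v ∈ V0 i ⊔ V1 i → w ∈ W0 j →
      sg j w v = (-1 : ℚ) ^ (i * j) • sus v w)
    (hsg_wv' : ∀ {i j : ℤ} {v w : Lc}, v ∈ V0 i → w ∈ W1 j →
      sg j w v = (-1 : ℚ) ^ (i * j) • sus v w)
    (hsg_vv : ∀ {i i' : ℤ} {v v' : Lc}, v ∈ V0 i ⊔ V1 i → v' ∈ V0 i' ⊔ V1 i' →
      sg i v v' = 0)
    (hsg_ww : ∀ {j j' : ℤ} {w w' : Lc}, w ∈ W0 j ⊔ W1 j → w' ∈ W0 j' ⊔ W1 j' →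
      sg j w w' = 0)
    (hsg_vS : ∀ {i k : ℤ} {v x : Lc}, v ∈ V0 i ⊔ V1 i → x ∈ Sp k → sg i v x = 0)
    (hsg_wS : ∀ {j k : ℤ} {w x : Lc}, w ∈ W0 j ⊔ W1 j → x ∈ Sp k → sg j w x = 0)
    (hsg_Av : ∀ {a : ℤ} {A : Lc}, A ∈ G.lieSub (fun i => V0 i ⊔ V1 i ⊔ W0 i ⊔ W1 i) →
      A ∈ G.grade a → ∀ {i : ℤ} {v : Lc}, v ∈ V0 i ⊔ V1 i →
      sg a A v = (-1 : ℚ) ^ (i * a) • sg i v A)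
    (hsg_Aw : ∀ {a : ℤ} {A : Lc}, A ∈ G.lieSub (fun i => V0 i ⊔ V1 i ⊔ W0 i ⊔ W1 i) →
      A ∈ G.grade a → ∀ {j : ℤ} {w : Lc}, w ∈ W0 j ⊔ W1 j →
      sg a A w = (-1 : ℚ) ^ (j * a) • sg j w A)
    (hsg_AS : ∀ {a : ℤ} {A : Lc}, A ∈ G.lieSub (fun i => V0 i ⊔ V1 i ⊔ W0 i ⊔ W1 i) →
      A ∈ G.grade a → ∀ {k : ℤ} {x : Lc}, x ∈ Sp k → sg a A x = 0)
    -- the degree `-1` derivation `D` of `L₁`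
    (D : Lc →ₗ[ℚ] Lc)
    (hD_grade : ∀ {i : ℤ} {x : Lc}, x ∈ G.grade i → D x ∈ G.grade (i - 1))
    (hD_der : ∀ {i : ℤ} (x y : Lc), x ∈ G.grade i →
      D (G.br x y) = G.br (D x) y + (-1 : ℚ) ^ ((-1 : ℤ) * i) • G.br x (D y))
    -- `D = ∂_V` on `V`, `D = ∂_W` on `W`, with `∂(V₀) = ∂(W₀) = 0`,
    -- `∂(V₁) ⊆ 𝕃(V₀)` and `∂(W₁) ⊆ 𝕃(W₀)`
    (hD_V0 : ∀ {i : ℤ} {v : Lc}, v ∈ V0 i → D v = 0)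
    (hD_W0 : ∀ {j : ℤ} {w : Lc}, w ∈ W0 j → D w = 0)
    (hD_V1 : ∀ {i : ℤ} {v : Lc}, v ∈ V1 i → D v ∈ G.lieSub V0)
    (hD_W1 : ∀ {j : ℤ} {w : Lc}, w ∈ W1 j → D w ∈ G.lieSub W0)
    -- minimality of the two Quillen models
    (hD_V1dec : ∀ {i : ℤ} {v : Lc}, v ∈ V1 i → D v ∈ G.dec)
    (hD_W1dec : ∀ {j : ℤ} {w : Lc}, w ∈ W1 j → D w ∈ G.dec)
    -- the value of `D` on the suspension generators
    (hD_sus00 : ∀ {i j : ℤ} {v w : Lc}, v ∈ V0 i → w ∈ W0 j → D (sus v w) = G.br v w)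
    (hD_sus10 : ∀ {i j : ℤ} {v w : Lc}, v ∈ V1 i → w ∈ W0 j →
      D (sus v w) = G.br v w - (-1 : ℚ) ^ ((i + 1) * j) • sg j w (D v))
    (hD_sus01 : ∀ {i j : ℤ} {v w : Lc}, v ∈ V0 i → w ∈ W1 j →
      D (sus v w) = G.br v w - (-1 : ℚ) ^ i • sg i v (D w))
    -- `(L₁, D)` is a dgl
    (hDD : ∀ x : Lc, D (D x) = 0)
 :
    ∀ (l : List (ℤ × Lc)), 3 ≤ l.length →
      (∀ p ∈ l, p.2 ∈ G.lieSub (fun i => V0 i ⊔ V1 i) ∧ p.2 ∈ G.grade p.1) →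
      ∀ {T : Lc}, T ∈ G.lieSub W0 → (iterBr sg D l).1 T = 0 := by
  have hle : G.lieSub (fun i => V0 i ⊔ V1 i ⊔ W0 i) ≤
      G.lieSub (fun i => V0 i ⊔ V1 i ⊔ W0 i ⊔ W1 i) := GLA.lieSub_mono fun _ => le_sup_left
  have hsus {i j w} (hw : w ∈ W0 j) : V0 i ⊔ V1 i ≤ (Sp (i + j + 1)).comap (sus.flip w) :=
    sup_le (fun _ hv => hsus00 hv hw) fun _ hv => hsus10 hv hw
  have hσ : G.IsSuspDerFamily (fun i => V0 i ⊔ V1 i) W0 (fun v w => sus v w) sg :=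
    { left_le_grade := fun i => sup_le (hV0 i) (hV1 i)
      right_le_grade := hW0
      isDer := fun hA ha =>
        ⟨fun hx => add_assoc _ _ (1 : ℤ) ▸ hsg_grade (hle hA) ha hx, hsg_der (hle hA) ha⟩
      left_left := hsg_vv
      left_right := hsg_vw
      right_left := hsg_wv
      right_right := fun hw hw' => hsg_ww (Submodule.mem_sup_left hw) (Submodule.mem_sup_left hw')
      apply_left := fun hA ha => hsg_Av (hle hA) ha
      apply_right := fun hA ha _ _ hw => hsg_Aw (hle hA) ha (Submodule.mem_sup_left hw)
      apply_susp := fun hA ha _ _ _ _ hv hw => hsg_AS (hle hA) ha (hsus hw hv) }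
  have hD : G.IsSuspDifferential (fun i => V0 i ⊔ V1 i) W0 (fun v w => sus v w) sg D := by
    refine ⟨⟨hD_grade, hD_der⟩, fun hv => ?_, hD_W0, fun {i j v w} hv hw => ?_⟩
    · obtain ⟨v₀, h₀, v₁, h₁, rfl⟩ := Submodule.mem_sup.1 hv
      rw [map_add, hD_V0 h₀, zero_add]
      exact GLA.lieSub_mono (fun _ => le_sup_left) (hD_V1 h₁)
    · obtain ⟨v₀, h₀, v₁, h₁, rfl⟩ := Submodule.mem_sup.1 hv
      simp only [map_add, LinearMap.add_apply, hD_sus00 h₀ hw, hD_sus10 h₁ hw, hD_V0 h₀, zero_add,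
        add_sub_assoc]
  exact fun _ hlength hl _ hT => statement10_general hσ hD hlength hl hT
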